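/- Let β be a non-zero real number, let ε = 1 + βi, let K = ℚ(βi), and let Q be a non-trivial divisible subgroup of (ℝ,+) of finite ℚ-linear dimension. Let G = {exp(εt + q) : t ∈ ℝ, q ∈ Q} ⊆ ℂ*. Assume SC_K holds. Then for every finite tuple c of elements of ℂ* there exists a finite tuple c' of elements of ℂ* extending c such that for every finite tuple y of elements of ℂ*: 2·trdeg(y / ℚ(c')) − (r(y, c') − r(c')) ≥ 0, where for a tuple z, r(z) = dim_ℚ(ℚ ⊗_ℤ (D(z) ∩ G)) with D(z) the divisible hull {w ∈ ℂ* : w^m lies in the multiplicative subgroup generated by the coordinates of z for some integer m ≥ 1}, and r(y, c') is this quantity for the concatenated tuple. Moreover, if all coordinates of c lie in G, then c' can be chosen with all coordinates in G. -/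

import Mathlib

open Complex TensorProduct

noncomputable section

/-- `F`-linear dimension of the `F`-span of a set of complex numbers. -/
def linDim (F : Type*) [Field F] [Algebra F ℂ] (s : Set ℂ) : ℕ :=
  Module.finrank F (Submodule.span F s)

/-- Transcendence degree over ℚ of ℚ(s): the size of the largest algebraically
independent finite subset of `s`. -/
def trdeg (s : Set ℂ) : ℕ :=
  sSup {k : ℕ | ∃ t : Finset ℂ, ↑t ⊆ s ∧ t.card = k ∧
    AlgebraicIndependent ℚ (fun x : {y : ℂ // y ∈ t} => (x : ℂ))}

/-- Transcendence degree of ℚ(C)(s) over ℚ(C). -/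
def trdegOver (C s : Set ℂ) : ℕ :=
  sSup {k : ℕ | ∃ t : Finset ℂ, ↑t ⊆ s ∧ t.card = k ∧
    AlgebraicIndependent (IntermediateField.adjoin ℚ C) (fun x : {y : ℂ // y ∈ t} => (x : ℂ))}

/-- The complex exponential as a map into the units of ℂ. -/
def cexpU (z : ℂ) : ℂˣ := Units.mk0 (Complex.exp z) (Complex.exp_ne_zero z)

lemma cexpU_add (z w : ℂ) : cexpU (z + w) = cexpU z * cexpU w := by
  ext; simp [cexpU, Complex.exp_add]

lemma cexpU_zero : cexpU 0 = 1 := by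
  ext; simp [cexpU]

lemma cexpU_neg (z : ℂ) : cexpU (-z) = (cexpU z)⁻¹ := by
  ext; simp [cexpU, Complex.exp_neg]

/-- The green subgroup `G = exp(εℝ + Q)` of `ℂ*`. -/
def greenGroup (ε : ℂ) (Q : AddSubgroup ℝ) : Subgroup ℂˣ where
  carrier := {u | ∃ t : ℝ, ∃ q ∈ Q, u = cexpU (ε * t + q)}
  one_mem' := ⟨0, 0, Q.zero_mem, by simp [cexpU_zero]⟩
  mul_mem' := by
    rintro u v ⟨t₁, q₁, hq₁, rfl⟩ ⟨t₂, q₂, hq₂, rfl⟩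
    exact ⟨t₁ + t₂, q₁ + q₂, Q.add_mem hq₁ hq₂, by
      rw [← cexpU_add]; congr 1; push_cast; ring⟩
  inv_mem' := by
    rintro u ⟨t, q, hq, rfl⟩
    exact ⟨-t, -q, Q.neg_mem hq, by rw [← cexpU_neg]; congr 1; push_cast; ring⟩

/-- The divisible hull `D(S)` of the subgroup of `ℂ*` generated by a set `S`. -/
def divHull (S : Set ℂˣ) : Subgroup ℂˣ where
  carrier := {u | ∃ m : ℕ, 1 ≤ m ∧ u ^ m ∈ Subgroup.closure S}
  one_mem' := ⟨1, le_refl 1, by simpa using Subgroup.one_mem _⟩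
  mul_mem' := by
    rintro u v ⟨m₁, hm₁, h₁⟩ ⟨m₂, hm₂, h₂⟩
    refine ⟨m₁ * m₂, Nat.one_le_iff_ne_zero.mpr (by positivity), ?_⟩
    rw [mul_pow]
    exact Subgroup.mul_mem _ (by rw [pow_mul]; exact Subgroup.pow_mem _ h₁ _)
      (by rw [mul_comm m₁ m₂, pow_mul]; exact Subgroup.pow_mem _ h₂ _)
  inv_mem' := by
    rintro u ⟨m, hm, h⟩
    exact ⟨m, hm, by rw [inv_pow]; exact Subgroup.inv_mem _ h⟩

/-- The ℚ-rank of a subgroup `H` of `ℂ*`: `dim_ℚ (ℚ ⊗_ℤ H)`. -/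
def qRank (H : Subgroup ℂˣ) : ℕ :=
  Module.finrank ℚ (ℚ ⊗[ℤ] Additive ↥H)

end

/-!
Green points are exponentials of `z = (1 + βi) t + q` with `t` real and `q ∈ Q`. Apply `SC_K` to the
logarithms `s` of `n` multiplicatively independent green points together with their conjugates.
The elements of `s ∪ conj s` are `K`-combinations of the numbers `t` and `q`, since `1 ± βi ∈ K`, so
this set has `K`-dimension at most `n + dim Q`; its `ℚ`-dimension is at least `2n - 2 dim Q`,
because an element common to the `ℚ`-spans of `s` and `conj s` is determined by its `q`-coordinate
and that of its conjugate. Hence `n ≤ 2 trdeg(exp s) + const`, so the predimension `2 trdeg - r` is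
bounded below on finite sets.

Adjoin to `c` finitely many green points so that the predimension becomes minimal. The result `c'`
is strong: for every `y`, the rank of `D(y, c') ∩ G` is already realised by finitely many green
points algebraic over `y, c'`, so the predimension of `y, c'` is at least that of `c'` together with
these points.
-/

open scoped ComplexConjugate

lemma natCast_sSup_card_indep {α : Type*} (M : Matroid α) {s : Set α} (hs : M.IsRkFinite s) :
    (sSup {k : ℕ | ∃ t : Finset α, ↑t ⊆ s ∧ t.card = k ∧ M.Indep (t : Set α)} : ℕ) = M.eRk s := by
  obtain ⟨r, hr⟩ := ENat.ne_top_iff_exists.mp hs.eRk_lt_top.ne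
  suffices IsGreatest {k : ℕ | ∃ t : Finset α, ↑t ⊆ s ∧ t.card = k ∧ M.Indep (t : Set α)} r by
    rw [this.csSup_eq, hr]
  constructor
  · obtain ⟨I, hIs, hI, hIr⟩ := Matroid.le_eRk_iff.mp hr.le
    obtain ⟨t, rfl⟩ := (Set.finite_of_encard_eq_coe hIr).exists_finset_coe
    exact ⟨t, hIs, by simpa using hIr, hI⟩
  · rintro _ ⟨t, hts, rfl, ht⟩
    have := ht.encard_le_eRk_of_subset hts
    rw [← hr, Set.encard_coe_eq_coe_finsetCard] at this
    exact_mod_cast this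

lemma natCast_trdeg {s : Set ℂ} (hs : s.Finite) :
    (trdeg s : ℕ∞) = (AlgebraicIndependent.matroid ℚ ℂ).eRk s :=
  natCast_sSup_card_indep (AlgebraicIndependent.matroid ℚ ℂ) (Matroid.isRkFinite_of_finite _ hs)

lemma natCast_trdegOver (C : Set ℂ) {s : Set ℂ} (hs : s.Finite) :
    (trdegOver C s : ℕ∞) =
      (AlgebraicIndependent.matroid (IntermediateField.adjoin ℚ C) ℂ).eRk s :=
  natCast_sSup_card_indep (AlgebraicIndependent.matroid (IntermediateField.adjoin ℚ C) ℂ)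
    (Matroid.isRkFinite_of_finite _ hs)

section AlgebraicMatroid

variable {F E : Type*} [Field F] [Field E] [Algebra F E]

lemma mem_closure_algebraicMatroid_iff {s : Set E} {x : E} :
    x ∈ (AlgebraicIndependent.matroid F E).closure s ↔
      IsAlgebraic (IntermediateField.adjoin F s) x := by
  rw [AlgebraicIndependent.matroid_closure_eq, IntermediateField.isAlgebraic_adjoin_iff]
  rfl

lemma closure_algebraicMatroid_adjoin (C s : Set E) :
    (AlgebraicIndependent.matroid (IntermediateField.adjoin F C) E).closure s =
      (AlgebraicIndependent.matroid F E).closure (C ∪ s) := by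
  ext x
  rw [mem_closure_algebraicMatroid_iff, mem_closure_algebraicMatroid_iff,
    ← IntermediateField.adjoin_adjoin_left]
  rfl

lemma eRk_algebraicMatroid_union_le (C s : Set E) :
    (AlgebraicIndependent.matroid F E).eRk (C ∪ s) ≤
      (AlgebraicIndependent.matroid F E).eRk C +
        (AlgebraicIndependent.matroid (IntermediateField.adjoin F C) E).eRk s := by
  set M := AlgebraicIndependent.matroid F E
  set N := AlgebraicIndependent.matroid (IntermediateField.adjoin F C) E
  obtain ⟨I, hI⟩ := N.exists_isBasis s
  have hs : s ⊆ M.closure (C ∪ I) := by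
    rw [← closure_algebraicMatroid_adjoin]
    exact hI.subset_closure
  calc M.eRk (C ∪ s) ≤ M.eRk (M.closure (C ∪ I)) :=
        M.eRk_mono <| Set.union_subset
          (Set.subset_union_left.trans (M.subset_closure _ (Set.subset_univ _))) hs
    _ = M.eRk (C ∪ I) := M.eRk_closure_eq _
    _ ≤ M.eRk C + I.encard := M.eRk_union_le_eRk_add_encard _ _
    _ = M.eRk C + N.eRk s := by rw [hI.eRk_eq_encard]

lemma eRk_algebraicMatroid_image_le {E' : Type*} [Field E'] [Algebra F E'] (φ : E →ₐ[F] E')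
    (s : Set E) :
    (AlgebraicIndependent.matroid F E').eRk (φ '' s) ≤
      (AlgebraicIndependent.matroid F E).eRk s := by
  refine Matroid.eRk_le_iff.mpr fun I hIs hI ↦ ?_
  obtain ⟨J, hJs, rfl⟩ := Set.subset_image_iff.mp hIs
  have hJ : AlgebraicIndependent F (fun x : J ↦ φ x) :=
    AlgebraicIndependent.comp hI (fun x : J ↦ ⟨φ x, x, x.2, rfl⟩) fun x y hxy ↦
      Subtype.ext (φ.injective (congrArg Subtype.val hxy))
  have hJ' : (AlgebraicIndependent.matroid F E).Indep J := hJ.of_comp φ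
  exact (Set.encard_image_le _ _).trans (hJ'.encard_le_eRk_of_subset hJs)

end AlgebraicMatroid

lemma trdeg_le_of_isAlgebraic {s t : Set ℂ} (hs : s.Finite) (ht : t.Finite)
    (h : ∀ x ∈ s, IsAlgebraic (IntermediateField.adjoin ℚ t) x) : trdeg s ≤ trdeg t := by
  have hst : s ⊆ (AlgebraicIndependent.matroid ℚ ℂ).closure t := fun x hx ↦
    mem_closure_algebraicMatroid_iff.mpr (h x hx)
  rw [← Nat.cast_le (α := ℕ∞), natCast_trdeg hs, natCast_trdeg ht, ← Matroid.eRk_closure_eq _ t]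
  exact Matroid.eRk_mono _ hst

lemma trdeg_union_le {s t : Set ℂ} (hs : s.Finite) (ht : t.Finite) :
    trdeg (s ∪ t) ≤ trdeg s + trdeg t := by
  rw [← Nat.cast_le (α := ℕ∞), Nat.cast_add, natCast_trdeg hs, natCast_trdeg ht,
    natCast_trdeg (hs.union ht)]
  exact Matroid.eRk_union_le_eRk_add_eRk _ _ _

lemma trdeg_union_le_trdeg_add_trdegOver {C s : Set ℂ} (hC : C.Finite) (hs : s.Finite) :
    trdeg (C ∪ s) ≤ trdeg C + trdegOver C s := by
  rw [← Nat.cast_le (α := ℕ∞), Nat.cast_add, natCast_trdeg (hC.union hs), natCast_trdeg hC,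
    natCast_trdegOver C hs]
  exact eRk_algebraicMatroid_union_le C s

lemma trdeg_image_conj_le {s : Set ℂ} (hs : s.Finite) : trdeg (conj '' s) ≤ trdeg s := by
  rw [← Nat.cast_le (α := ℕ∞), natCast_trdeg (hs.image _), natCast_trdeg hs]
  exact eRk_algebraicMatroid_image_le (starRingEnd ℂ).toRatAlgHom s

lemma trdeg_exp_union_conj_le {s : Set ℂ} (hs : s.Finite) :
    trdeg (exp '' (s ∪ conj '' s)) ≤ 2 * trdeg (exp '' s) := by
  have hconj : exp '' (conj '' s) = conj '' (exp '' s) := by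
    simp only [Set.image_image, exp_conj]
  rw [Set.image_union, hconj]
  have hexp := hs.image exp
  linarith [trdeg_union_le hexp (hexp.image conj), trdeg_image_conj_le hexp]

lemma isAlgebraic_of_mem_divHull {S : Set ℂˣ} {u : ℂˣ} (hu : u ∈ divHull S) :
    IsAlgebraic (IntermediateField.adjoin ℚ (Units.val '' S)) (u : ℂ) := by
  have hcl : ∀ w ∈ Subgroup.closure S,
      (w : ℂ) ∈ IntermediateField.adjoin ℚ (Units.val '' S) := by
    intro w hw
    induction hw using Subgroup.closure_induction with
    | mem x hx => exact IntermediateField.subset_adjoin _ _ ⟨x, hx, rfl⟩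
    | one => exact one_mem _
    | mul x y _ _ hx hy => simpa using mul_mem hx hy
    | inv x _ hx => simpa using inv_mem hx
  obtain ⟨m, hm, hum⟩ := hu
  have hpow : IsAlgebraic (IntermediateField.adjoin ℚ (Units.val '' S)) ((u ^ m : ℂˣ) : ℂ) :=
    isAlgebraic_algebraMap (⟨_, hcl _ hum⟩ : IntermediateField.adjoin ℚ (Units.val '' S))
  exact IsAlgebraic.of_pow hm (by simpa using hpow)

lemma rank_submodule_eq_of_forall_smul_mem {R M : Type*} [CommRing R] [IsDomain R]
    [AddCommGroup M] [Module R M] (N : Submodule R M) (h : ∀ x : M, ∃ a : R, a ≠ 0 ∧ a • x ∈ N) :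
    Module.rank R N = Module.rank R M := by
  have hquot : Module.rank R (M ⧸ N) = 0 := by
    refine rank_eq_zero_iff.mpr fun y ↦ ?_
    obtain ⟨x, rfl⟩ := N.mkQ_surjective y
    obtain ⟨a, ha, hax⟩ := h x
    exact ⟨a, ha, by rwa [← map_smul, Submodule.mkQ_apply, Submodule.Quotient.mk_eq_zero]⟩
  rw [← rank_quotient_add_rank_of_isDomain N, hquot, zero_add]

lemma subset_divHull (S : Set ℂˣ) : S ⊆ divHull S := fun u hu ↦
  ⟨1, le_rfl, by simpa using Subgroup.subset_closure hu⟩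

lemma rank_divHull_lt_aleph0 {S : Set ℂˣ} (hS : S.Finite) :
    Module.rank ℤ (Additive (divHull S)) < Cardinal.aleph0 := by
  set T : Set (divHull S) := (divHull S).subtype ⁻¹' S
  have hcl : Subgroup.closure S = (Subgroup.closure T).map (divHull S).subtype := by
    rw [MonoidHom.map_closure, Set.image_preimage_eq_of_subset (by simpa using subset_divHull S)]
  have hT : (Additive.toMul ⁻¹' T).Finite :=
    (hS.preimage Subtype.val_injective.injOn).preimage Additive.toMul.injective.injOn
  have hpow : ∀ x : Additive (divHull S), ∃ a : ℤ, a ≠ 0 ∧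
      a • x ∈ Submodule.span ℤ (Additive.toMul ⁻¹' T) := by
    intro x
    obtain ⟨m, hm, hxm⟩ := x.toMul.2
    refine ⟨m, by lia, ?_⟩
    rw [hcl] at hxm
    obtain ⟨w, hw, hwx⟩ := hxm
    have hw' : w = x.toMul ^ m := Subtype.ext hwx
    rw [hw'] at hw
    rw [← AddSubgroup.toIntSubmodule_closure, ← Subgroup.toAddSubgroup_closure, natCast_zsmul]
    exact hw
  rw [← rank_submodule_eq_of_forall_smul_mem _ hpow]
  exact (rank_span_le _).trans_lt (Cardinal.lt_aleph0_iff_set_finite.mpr hT)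

lemma qRank_eq_finrank_int (H : Subgroup ℂˣ) : qRank H = Module.finrank ℤ (Additive H) :=
  (TensorProduct.isBaseChange ℤ (Additive H) ℚ).finrank_eq

lemma exists_linearIndependent_fin_qRank (H : Subgroup ℂˣ) :
    ∃ v : Fin (qRank H) → ℂˣ, (∀ i, v i ∈ H) ∧
      LinearIndependent ℤ (fun i ↦ Additive.ofMul (v i)) := by
  obtain ⟨w, hw⟩ := exists_linearIndependent_of_le_finrank (qRank_eq_finrank_int H).le
  refine ⟨fun i ↦ (w i).toMul, fun i ↦ (w i).toMul.2, ?_⟩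
  exact hw.map_injOn (MonoidHom.toAdditive H.subtype).toIntLinearMap
    (Subtype.val_injective.injOn (s := _))

lemma card_le_qRank {S : Set ℂˣ} (hS : S.Finite) {H : Subgroup ℂˣ} (hH : H ≤ divHull S)
    {n : ℕ} {v : Fin n → ℂˣ} (hv : ∀ i, v i ∈ H)
    (hind : LinearIndependent ℤ (fun i ↦ Additive.ofMul (v i))) : n ≤ qRank H := by
  have hrank : Module.rank ℤ (Additive H) < Cardinal.aleph0 :=
    (LinearMap.rank_le_of_injective
      (MonoidHom.toAdditive (Subgroup.inclusion hH)).toIntLinearMap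
      (Subgroup.inclusion_injective hH)).trans_lt (rank_divHull_lt_aleph0 hS)
  have hindH : LinearIndependent ℤ (fun i ↦ (Additive.ofMul ⟨v i, hv i⟩ : Additive H)) :=
    .of_comp (MonoidHom.toAdditive H.subtype).toIntLinearMap hind
  rw [qRank_eq_finrank_int, ← Nat.cast_le (α := Cardinal), ← Cardinal.mk_fin, Module.finrank,
    Cardinal.cast_toNat_of_lt_aleph0 hrank]
  exact hindH.cardinal_le_rank

lemma linDim_mono {F : Type*} [Field F] [Algebra F ℂ] {s t : Set ℂ} (ht : t.Finite)
    (h : s ⊆ Submodule.span F t) : linDim F s ≤ linDim F t :=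
  have := Module.Finite.span_of_finite F ht
  Submodule.finrank_mono (Submodule.span_le.mpr h)

lemma linDim_le_finrank {K : IntermediateField ℚ ℂ} (V : Submodule ℚ ℂ) [Module.Finite ℚ V]
    {s : Set ℂ} (h : s ⊆ Submodule.span K (V : Set ℂ)) : linDim K s ≤ Module.finrank ℚ V := by
  let b := Module.finBasis ℚ V
  have hb : Submodule.span ℚ (Set.range fun i ↦ (b i : ℂ)) = V := by
    have := congrArg (Submodule.map V.subtype) b.span_eq
    rwa [Submodule.map_span, Submodule.map_top, Submodule.range_subtype, ← Set.range_comp] at this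
  rw [← hb, Submodule.span_span_of_tower] at h
  calc linDim K s ≤ linDim K (Set.range fun i ↦ (b i : ℂ)) := linDim_mono (Set.finite_range _) h
    _ ≤ Module.finrank ℚ V := 
        (finrank_range_le_card (R := K) fun i ↦ (b i : ℂ)).trans_eq (Fintype.card_fin _)

/-- The coordinate `t` of `z = (1 + βi) t + q` with `t q : ℝ`, for `β ≠ 0`. -/
noncomputable def lineCoord (β : ℝ) : ℂ →ₗ[ℚ] ℝ :=
  (β⁻¹ • imLm).restrictScalars ℚ

/-- The coordinate `q` of `z = (1 + βi) t + q` with `t q : ℝ`, for `β ≠ 0`. -/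
noncomputable def realCoord (β : ℝ) : ℂ →ₗ[ℚ] ℝ :=
  reLm.restrictScalars ℚ - lineCoord β

section GreenLogarithms

variable {β : ℝ}

lemma lineCoord_apply (z : ℂ) : lineCoord β z = β⁻¹ * z.im := rfl

lemma realCoord_apply (z : ℂ) : realCoord β z = z.re - β⁻¹ * z.im := rfl

lemma eq_lineCoord_add_realCoord (hβ : β ≠ 0) (z : ℂ) :
    z = (1 + β * I) * lineCoord β z + realCoord β z := by
  apply Complex.ext <;> simp [lineCoord_apply, realCoord_apply, hβ]

lemma conj_eq_lineCoord_add_realCoord (hβ : β ≠ 0) (z : ℂ) :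
    conj z = (1 - β * I) * lineCoord β z + realCoord β z := by
  apply Complex.ext <;> simp [lineCoord_apply, realCoord_apply, hβ]

lemma realCoord_line_add (hβ : β ≠ 0) (t q : ℝ) :
    realCoord β ((1 + β * I) * t + q) = q := by
  simp [realCoord_apply, hβ]

lemma eq_zero_of_realCoord_eq_zero (hβ : β ≠ 0) {z : ℂ} (hz : realCoord β z = 0)
    (hz' : realCoord β (conj z) = 0) : z = 0 := by
  rw [realCoord_apply] at hz hz'
  rw [conj_re, conj_im] at hz'
  have him : β⁻¹ * z.im = 0 := by linarith
  exact Complex.ext (by simpa [him] using hz) (by simpa [hβ] using him)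

variable {B : Submodule ℚ ℝ} [Module.Finite ℚ B] {s : Set ℂ}

lemma linDim_union_conj_le (hβ : β ≠ 0) {K : IntermediateField ℚ ℂ} (hK : (β : ℂ) * I ∈ K)
    (hs : s.Finite) (hsB : ∀ z ∈ s, realCoord β z ∈ B) :
    linDim K (s ∪ conj '' s) ≤ linDim ℚ s + Module.finrank ℚ B := by
  have := Module.Finite.span_of_finite ℚ hs
  let ofRealL : ℝ →ₗ[ℚ] ℂ := (Algebra.linearMap ℝ ℂ).restrictScalars ℚ
  let T := (Submodule.span ℚ s).map (lineCoord β)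
  have hmem : ∀ r ∈ T ⊔ B, ∀ k ∈ K, k * (r : ℂ) ∈
      Submodule.span K ((T ⊔ B).map ofRealL : Set ℂ) := fun r hr k hk ↦
    Submodule.smul_mem _ (⟨k, hk⟩ : K) (Submodule.subset_span ⟨r, hr, rfl⟩)
  have hT : ∀ z ∈ s, lineCoord β z ∈ T ⊔ B := fun z hz ↦
    Submodule.mem_sup_left ⟨z, Submodule.subset_span hz, rfl⟩
  have hB : ∀ z ∈ s, realCoord β z ∈ T ⊔ B := fun z hz ↦ Submodule.mem_sup_right (hsB z hz)
  have hsub : s ∪ conj '' s ⊆ Submodule.span K ((T ⊔ B).map ofRealL : Set ℂ) := by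
    rintro w (hz | ⟨z, hz, rfl⟩)
    · simpa [← eq_lineCoord_add_realCoord hβ] using add_mem
        (hmem _ (hT w hz) _ (add_mem (one_mem _) hK)) (hmem _ (hB w hz) _ (one_mem _))
    · simpa [← conj_eq_lineCoord_add_realCoord hβ] using add_mem
        (hmem _ (hT z hz) _ (sub_mem (one_mem _) hK)) (hmem _ (hB z hz) _ (one_mem _))
  calc linDim K (s ∪ conj '' s) ≤ Module.finrank ℚ ((T ⊔ B).map ofRealL) :=
        linDim_le_finrank _ hsub
    _ ≤ Module.finrank ℚ ↥(T ⊔ B) := Submodule.finrank_map_le _ _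
    _ ≤ Module.finrank ℚ T + Module.finrank ℚ B :=
        Submodule.finrank_add_le_finrank_add_finrank _ _
    _ ≤ linDim ℚ s + Module.finrank ℚ B := by
        gcongr
        exact Submodule.finrank_map_le _ _

lemma finrank_le_of_realCoord_mem (hβ : β ≠ 0) {P : Submodule ℚ ℂ}
    (hP : ∀ z ∈ P, realCoord β z ∈ B) (hP' : ∀ z ∈ P, realCoord β (conj z) ∈ B) :
    Module.finrank ℚ P ≤ 2 * Module.finrank ℚ B := by
  let conjL : ℂ →ₗ[ℚ] ℂ := (starRingEnd ℂ).toRatAlgHom.toLinearMap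
  let g : P →ₗ[ℚ] B × B :=
    ((realCoord β).restrict hP).prod ((realCoord β ∘ₗ conjL).restrict hP')
  have hg : Function.Injective g := by
    refine (injective_iff_map_eq_zero g).mpr fun z hz ↦ Subtype.ext ?_
    obtain ⟨hz₁, hz₂⟩ := Prod.ext_iff.mp hz
    exact eq_zero_of_realCoord_eq_zero hβ (congrArg Subtype.val hz₁) (congrArg Subtype.val hz₂)
  calc Module.finrank ℚ P ≤ Module.finrank ℚ (B × B) := LinearMap.finrank_le_finrank_of_injective hg
    _ = 2 * Module.finrank ℚ B := by rw [Module.finrank_prod, two_mul]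

lemma two_mul_linDim_le (hβ : β ≠ 0) (hs : s.Finite) (hsB : ∀ z ∈ s, realCoord β z ∈ B) :
    2 * linDim ℚ s ≤ linDim ℚ (s ∪ conj '' s) + 2 * Module.finrank ℚ B := by
  let conjL : ℂ ≃ₗ[ℚ] ℂ := conjAe.toLinearEquiv.restrictScalars ℚ
  let X := Submodule.span ℚ s
  have hX : Module.Finite ℚ X := Module.Finite.span_of_finite ℚ hs
  let X' : Submodule ℚ ℂ := X.map (conjL : ℂ →ₗ[ℚ] ℂ)
  have hXB : ∀ z ∈ X, realCoord β z ∈ B := by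
    change X ≤ B.comap (realCoord β)
    exact Submodule.span_le.mpr hsB
  have hinf : Module.finrank ℚ ↥(X ⊓ X') ≤ 2 * Module.finrank ℚ B := by
    refine finrank_le_of_realCoord_mem hβ (fun z hz ↦ hXB z hz.1) ?_
    rintro _ ⟨-, z, hz, rfl⟩
    exact (conj_conj z).symm ▸ hXB z hz
  have hconj : Module.finrank ℚ X' = Module.finrank ℚ X := conjL.finrank_map_eq X
  have hsup : Submodule.span ℚ (s ∪ conj '' s) = X ⊔ X' := by
    rw [Submodule.span_union]
    exact congrArg (X ⊔ ·) (Submodule.map_span (conjL : ℂ →ₗ[ℚ] ℂ) s).symm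
  have hdim := Submodule.finrank_sup_add_finrank_inf_eq X X'
  rw [← hsup, hconj] at hdim
  change 2 * Module.finrank ℚ X ≤ Module.finrank ℚ (Submodule.span ℚ (s ∪ conj '' s)) + _
  lia

lemma linDim_le_two_mul_trdeg_exp (hβ : β ≠ 0) {K : IntermediateField ℚ ℂ}
    (hK : (β : ℂ) * I ∈ K) {d : ℕ} (hs : s.Finite) (hsB : ∀ z ∈ s, realCoord β z ∈ B)
    (hSC : linDim ℚ (s ∪ conj '' s) ≤
      linDim K (s ∪ conj '' s) + trdeg (exp '' (s ∪ conj '' s)) + d) :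
    linDim ℚ s ≤ 2 * trdeg (exp '' s) + (3 * Module.finrank ℚ B + d) := by
  linarith [two_mul_linDim_le hβ hs hsB, linDim_union_conj_le hβ hK hs hsB,
    trdeg_exp_union_conj_le hs]

end GreenLogarithms

lemma linearIndependent_of_cexpU {ι : Type*} {x : ι → ℂ}
    (h : LinearIndependent ℤ (fun i ↦ Additive.ofMul (cexpU (x i)))) :
    LinearIndependent ℚ x := by
  let expHom : ℂ →+ Additive ℂˣ :=
    { toFun := fun z ↦ Additive.ofMul (cexpU z)
      map_zero' := by rw [cexpU_zero]; rfl
      map_add' := fun z w ↦ by rw [cexpU_add]; rfl }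
  rw [← LinearIndependent.iff_fractionRing ℤ ℚ]
  exact LinearIndependent.of_comp expHom.toIntLinearMap h

lemma card_le_two_mul_trdeg_of_mem_greenGroup {β : ℝ} (hβ : β ≠ 0) {K : IntermediateField ℚ ℂ}
    (hK : (β : ℂ) * I ∈ K) {Q : AddSubgroup ℝ} [Module.Finite ℚ (Submodule.span ℚ (Q : Set ℝ))]
    {d : ℕ} (hSC : ∀ s : Set ℂ, s.Finite → linDim ℚ s ≤ linDim K s + trdeg (exp '' s) + d)
    {n : ℕ} {v : Fin n → ℂˣ} (hv : ∀ i, v i ∈ greenGroup (1 + β * I) Q)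
    (hind : LinearIndependent ℤ (fun i ↦ Additive.ofMul (v i))) :
    n ≤ 2 * trdeg (Units.val '' Set.range v) +
      (3 * Module.finrank ℚ (Submodule.span ℚ (Q : Set ℝ)) + d) := by
  choose t q hq hvx using hv
  obtain rfl : v = fun i ↦ cexpU ((1 + β * I) * t i + q i) := funext hvx
  set x : Fin n → ℂ := fun i ↦ (1 + β * I) * t i + q i
  have hx : ∀ z ∈ Set.range x, realCoord β z ∈ Submodule.span ℚ (Q : Set ℝ) := by
    rintro _ ⟨i, rfl⟩
    rw [realCoord_line_add hβ]
    exact Submodule.subset_span (hq i)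
  have hfin := Set.finite_range x
  have hn : linDim ℚ (Set.range x) = n := by
    rw [linDim, finrank_span_eq_card (linearIndependent_of_cexpU hind), Fintype.card_fin]
  have hexp : Units.val '' Set.range (fun i ↦ cexpU (x i)) = exp '' Set.range x := by
    simp only [← Set.range_comp]; rfl
  have := linDim_le_two_mul_trdeg_exp hβ hK hfin hx (hSC _ (hfin.union (hfin.image _)))
  rwa [hn, ← hexp] at this

/-- The predimension `k · trdeg(S) - r(S)` of a set `S` of nonzero complex numbers, where `r(S)` is
the rank of the part of the divisible hull of `S` lying in `G`. -/
noncomputable def predim (k : ℕ) (G : Subgroup ℂˣ) (S : Set ℂˣ) : ℤ :=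
  k * trdeg (Units.val '' S) - qRank (divHull S ⊓ G)

section Predimension

variable {k C : ℕ} {G : Subgroup ℂˣ} {A Y : Set ℂˣ}

lemma neg_le_predim
    (hG : ∀ (n : ℕ) (v : Fin n → ℂˣ), (∀ i, v i ∈ G) →
      LinearIndependent ℤ (fun i ↦ Additive.ofMul (v i)) →
      n ≤ k * trdeg (Units.val '' Set.range v) + C)
    (hA : A.Finite) : -(C : ℤ) ≤ predim k G A := by
  obtain ⟨v, hv, hind⟩ := exists_linearIndependent_fin_qRank (divHull A ⊓ G)
  have htr : trdeg (Units.val '' Set.range v) ≤ trdeg (Units.val '' A) := by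
    refine trdeg_le_of_isAlgebraic ((Set.finite_range v).image _) (hA.image _) ?_
    rintro _ ⟨_, ⟨i, rfl⟩, rfl⟩
    exact isAlgebraic_of_mem_divHull (hv i).1
  have hn : qRank (divHull A ⊓ G) ≤ k * trdeg (Units.val '' A) + C :=
    (hG _ v (fun i ↦ (hv i).2) hind).trans (by gcongr)
  rw [predim]
  lia

lemma exists_predim_union_le (hA : A.Finite) (hY : Y.Finite) :
    ∃ V : Set ℂˣ, V.Finite ∧ V ⊆ G ∧ predim k G (A ∪ V) ≤ predim k G (Y ∪ A) := by
  obtain ⟨v, hv, hind⟩ := exists_linearIndependent_fin_qRank (divHull (Y ∪ A) ⊓ G)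
  have hV := Set.finite_range v
  refine ⟨Set.range v, hV, Set.range_subset_iff.mpr fun i ↦ (hv i).2, ?_⟩
  have hrank : qRank (divHull (Y ∪ A) ⊓ G) ≤ qRank (divHull (A ∪ Set.range v) ⊓ G) :=
    card_le_qRank (hA.union hV) inf_le_left
      (fun i ↦ ⟨subset_divHull _ (Or.inr ⟨i, rfl⟩), (hv i).2⟩) hind
  have htr : trdeg (Units.val '' (A ∪ Set.range v)) ≤ trdeg (Units.val '' (Y ∪ A)) := by
    refine trdeg_le_of_isAlgebraic ((hA.union hV).image _) ((hY.union hA).image _) ?_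
    rintro _ ⟨u, hu | ⟨i, rfl⟩, rfl⟩
    · exact isAlgebraic_of_mem_divHull (subset_divHull _ (Or.inr hu))
    · exact isAlgebraic_of_mem_divHull (hv i).1
  unfold predim
  gcongr

lemma predim_union_le (hA : A.Finite) (hY : Y.Finite) :
    predim k G (Y ∪ A) ≤ predim k G A + (k * trdegOver (Units.val '' A) (Units.val '' Y) -
      (qRank (divHull (Y ∪ A) ⊓ G) - qRank (divHull A ⊓ G))) := by
  have htr : trdeg (Units.val '' (Y ∪ A)) ≤
      trdeg (Units.val '' A) + trdegOver (Units.val '' A) (Units.val '' Y) := by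
    rw [Set.image_union, Set.union_comm]
    exact trdeg_union_le_trdeg_add_trdegOver (hA.image _) (hY.image _)
  have hmul : (k : ℤ) * trdeg (Units.val '' (Y ∪ A)) ≤
      k * (trdeg (Units.val '' A) + trdegOver (Units.val '' A) (Units.val '' Y)) := by
    gcongr
    exact_mod_cast htr
  unfold predim
  linarith

lemma exists_strong_union {c : ℤ} (hc : ∀ S : Set ℂˣ, S.Finite → c ≤ predim k G S)
    (hA : A.Finite) :
    ∃ S : Set ℂˣ, S.Finite ∧ S ⊆ G ∧ ∀ Y : Set ℂˣ, Y.Finite →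
      predim k G (A ∪ S) ≤ predim k G (Y ∪ (A ∪ S)) := by
  obtain ⟨_, ⟨S, hS, hSG, rfl⟩, hmin⟩ := Int.exists_least_of_bdd
    (P := fun z ↦ ∃ S : Set ℂˣ, S.Finite ∧ S ⊆ G ∧ predim k G (A ∪ S) = z)
    ⟨c, by rintro _ ⟨S, hS, -, rfl⟩; exact hc _ (hA.union hS)⟩
    ⟨_, ∅, Set.finite_empty, Set.empty_subset _, rfl⟩
  refine ⟨S, hS, hSG, fun Y hY ↦ ?_⟩
  obtain ⟨V, hV, hVG, hle⟩ := exists_predim_union_le (k := k) (G := G) (hA.union hS) hY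
  rw [Set.union_assoc] at hle
  exact (hmin _ ⟨S ∪ V, hS.union hV, Set.union_subset hSG hVG, rfl⟩).trans hle

end Predimension

theorem statement10_general (β : ℝ) (hβ : β ≠ 0) (K : IntermediateField ℚ ℂ)
    (hK : (β : ℂ) * I ∈ K) (Q : AddSubgroup ℝ)
    [Module.Finite ℚ (Submodule.span ℚ (Q : Set ℝ))] (d : ℕ)
    (hSC : ∀ (m : ℕ) (x : Fin m → ℂ),
      (linDim K (Set.range x) : ℤ) + trdeg (Set.range fun i ↦ exp (x i))
        - linDim ℚ (Set.range x) ≥ -(d : ℤ)) :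
    ∀ (p : ℕ) (c : Fin p → ℂˣ), ∃ (p' : ℕ) (c' : Fin p' → ℂˣ),
      Set.range c ⊆ Set.range c'
      ∧ (∀ (n : ℕ) (y : Fin n → ℂˣ),
          2 * (trdegOver (Set.range fun i ↦ (c' i : ℂ)) (Set.range fun i ↦ (y i : ℂ)) : ℤ)
              - ((qRank (divHull (Set.range y ∪ Set.range c') ⊓ greenGroup (1 + β * I) Q) : ℤ)
                  - (qRank (divHull (Set.range c') ⊓ greenGroup (1 + β * I) Q) : ℤ))
            ≥ 0)
      ∧ ((∀ i, c i ∈ greenGroup (1 + β * I) Q) → ∀ i, c' i ∈ greenGroup (1 + β * I) Q) := by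
  intro p c
  have hSC' : ∀ s : Set ℂ, s.Finite → linDim ℚ s ≤ linDim K s + trdeg (exp '' s) + d := by
    intro s hs
    obtain ⟨m, x, -, rfl⟩ := hs.fin_param
    have hx := hSC m x
    rw [← Set.range_comp]
    simp only [Function.comp_def]
    lia
  obtain ⟨S, hS, hSG, hstrong⟩ := exists_strong_union (G := greenGroup (1 + β * I) Q)
    (fun _ ↦ neg_le_predim fun _ _ ↦ card_le_two_mul_trdeg_of_mem_greenGroup hβ hK hSC')
    (Set.finite_range c)
  obtain ⟨p', c', -, hc'⟩ := ((Set.finite_range c).union hS).fin_param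
  refine ⟨p', c', hc' ▸ Set.subset_union_left, fun n y ↦ ?_, fun hc ↦ ?_⟩
  · have hle := hstrong _ (Set.finite_range y)
    rw [← hc'] at hle
    have := hle.trans (predim_union_le (Set.finite_range c') (Set.finite_range y))
    rw [← Set.range_comp, ← Set.range_comp] at this
    exact nonneg_of_le_add_right this
  · exact Set.range_subset_iff.mp (hc' ▸ Set.union_subset (Set.range_subset_iff.mpr hc) hSG)

/-- assuming SC_K for `K = ℚ(βi)`, every finite tuple `c` of
nonzero complex numbers extends to a finite tuple `c'` which is strong for the
localised predimension: for all tuples `y`,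
`2·trdeg(y/ℚ(c')) − (r(y,c') − r(c')) ≥ 0`; moreover if `c ⊆ G` then `c'` can
be chosen inside `G`. -/
theorem statement10 (β : ℝ) (hβ : β ≠ 0) (ε : ℂ) (hε : ε = 1 + β * I)
    (K : IntermediateField ℚ ℂ) (hK : K = IntermediateField.adjoin ℚ {(β : ℂ) * I})
    (Q : AddSubgroup ℝ) (hQnt : Q ≠ ⊥)
    (hQdiv : ∀ q ∈ Q, ∀ m : ℕ, 0 < m → ∃ r ∈ Q, m • r = q)
    (l : ℕ) (hl : Module.rank ℚ (Submodule.span ℚ (Q : Set ℝ)) = l)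
    (hSC : ∀ (m : ℕ) (x : Fin m → ℂ),
      (linDim K (Set.range x) : ℤ) + trdeg (Set.range fun i => Complex.exp (x i))
        - linDim ℚ (Set.range x) ≥ -(trdeg (K : Set ℂ) : ℤ)) :
    ∀ (p : ℕ) (c : Fin p → ℂˣ), ∃ (p' : ℕ) (c' : Fin p' → ℂˣ),
      Set.range c ⊆ Set.range c'
      ∧ (∀ (n : ℕ) (y : Fin n → ℂˣ),
          2 * (trdegOver (Set.range fun i => (c' i : ℂ))
                (Set.range fun i => (y i : ℂ)) : ℤ)
              - ((qRank (divHull (Set.range y ∪ Set.range c') ⊓ greenGroup ε Q) : ℤ)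
                  - (qRank (divHull (Set.range c') ⊓ greenGroup ε Q) : ℤ))
            ≥ 0)
      ∧ ((∀ i, c i ∈ greenGroup ε Q) → ∀ i, c' i ∈ greenGroup ε Q) := by
  subst hε hK
  have := Module.finite_of_rank_eq_nat hl
  exact statement10_general β hβ _ (IntermediateField.mem_adjoin_simple_self ℚ _) Q _ hSC
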